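/- Let M = ⟨A | u = v⟩ with |v| ≤ |u| and suppose v is not a prefix of u. Then M is R-trivial, and moreover for words w, w' ∈ A*, [w]_M = [ww']_M implies w' = ε. -/

import Mathlib

/-- The congruence on a free monoid generated by the single relation `u = v`. -/
def oneRelCon {A : Type*} (u v : FreeMonoid A) : Con (FreeMonoid A) :=
  conGen (fun a b => a = u ∧ b = v)

/-!
Split the relation at the first letter where the two sides differ, as `p * a * x = p * b * y` with
`a ≠ b`. The congruence it generates is contained in the one generated by `a * x = b * y`, so it
suffices to treat the latter. Following Adian, that monoid is left cancellative: in a derivation the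
first letter can only alternate between `a` and `b`, and two successive changes `a → b → a` can be
removed by cancelling `y` in the shorter derivation between them. As no relator side is empty,
cancelling `w` in `w = w * w'` leaves the empty word on the left, whence `w' = 1`.
-/

section

variable {A : Type*}

theorem eq_of_dvd_of_dvd_of_con {N : Type*} [Monoid N] [IsDedekindFiniteMonoid N]
    [Subsingleton Nˣ] {c : Con N} (hc : ∀ w w', c w (w * w') → w' = 1) {m m' : c.Quotient}
    (h : m ∣ m') (h' : m' ∣ m) : m = m' := by
  obtain ⟨k, rfl⟩ := h
  obtain ⟨l, hl⟩ := h'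
  induction m using Con.induction_on with | _ w
  induction k using Con.induction_on with | _ x
  induction l using Con.induction_on with | _ y
  have hxy : x * y = 1 := hc w _ (by rw [← mul_assoc]; exact (Con.eq c).mp hl)
  rw [(IsUnit.of_mul_eq_one y hxy).eq_one, Con.coe_one, mul_one]

theorem exists_eq_append_cons_of_not_prefix {u v : List A} (huv : ¬ u <+: v) (hvu : ¬ v <+: u) :
    ∃ p a x b y, a ≠ b ∧ u = p ++ a :: x ∧ v = p ++ b :: y := by
  induction u generalizing v with
  | nil => exact absurd List.nil_prefix huv
  | cons a u ih =>
    cases v with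
    | nil => exact absurd List.nil_prefix hvu
    | cons b v =>
      obtain rfl | hab := eq_or_ne a b
      · rw [List.prefix_cons_inj] at huv hvu
        obtain ⟨p, c, x, d, y, hcd, rfl, rfl⟩ := ih huv hvu
        exact ⟨a :: p, c, x, d, y, hcd, rfl, rfl⟩
      · exact ⟨[], a, u, b, v, hab, rfl, rfl⟩

theorem toList_prefix_iff_dvd {u v : FreeMonoid A} : u.toList <+: v.toList ↔ u ∣ v :=
  List.prefix_iff_exists_eq_append

theorem eq_of_dvd_of_length_le {u v : FreeMonoid A} (h : u ∣ v) (hlen : v.length ≤ u.length) :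
    u = v :=
  (toList_prefix_iff_dvd.mpr h).eq_of_length_le hlen

/-- A symmetric set of rewriting rules on words in which every letter is the first letter of at most
one side, and the two sides of a rule start with different letters. In the terminology of Adian the
left graph of the presentation is a matching. -/
structure IsHeadMatching (R : List A → List A → Prop) : Prop where
  symm : ∀ {s t}, R s t → R t s
  ne_nil : ∀ {s t}, R s t → s ≠ []
  head_ne : ∀ {a b x y}, R (a :: x) (b :: y) → a ≠ b
  unique : ∀ {a x x' t t'}, R (a :: x) t → R (a :: x') t' → x = x' ∧ t = t'

/-- Derivations, using at most `n` rules of `R`, in which the first letter is rewritten at most once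
and the derivations of the tail before and after that are recursively of the same kind. For a head
matching this reaches everything that arbitrary derivations do, and left cancellation is immediate.
The bound `n` serves as the termination measure for transitivity. -/
inductive HeadEquiv (R : List A → List A → Prop) : ℕ → List A → List A → Prop
  | nil {n} : HeadEquiv R n [] []
  | cons {n s t} (a : A) (h : HeadEquiv R n s t) : HeadEquiv R n (a :: s) (a :: t)
  | head {n i j a b x y r s t} (hab : R (a :: x) (b :: y))
      (hs : HeadEquiv R i s (x ++ r)) (ht : HeadEquiv R j (y ++ r) t)
      (hn : i + j < n) : HeadEquiv R n (a :: s) (b :: t)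

namespace HeadEquiv

variable {R : List A → List A → Prop} {m n : ℕ} {s t : List A}

theorem mono (h : HeadEquiv R m s t) (hmn : m ≤ n) : HeadEquiv R n s t := by
  induction h generalizing n with
  | nil => exact .nil
  | cons a _ ih => exact .cons a (ih hmn)
  | head hab hs ht hn => exact .head hab hs ht (hn.trans_le hmn)

protected theorem refl (s : List A) : HeadEquiv R n s s := by
  induction s with
  | nil => exact .nil
  | cons a s ih => exact .cons a ih

protected theorem symm (hR : IsHeadMatching R) (h : HeadEquiv R n s t) : HeadEquiv R n t s := by
  induction h with
  | nil => exact .nil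
  | cons a _ ih => exact .cons a ih
  | head hab _ _ hn ihs iht => exact .head (hR.symm hab) iht ihs (by rwa [add_comm])

theorem append_left (h : HeadEquiv R n s t) (p : List A) : HeadEquiv R n (p ++ s) (p ++ t) := by
  induction p with
  | nil => exact h
  | cons a p ih => exact .cons a ih

theorem append_right (h : HeadEquiv R n s t) (q : List A) : HeadEquiv R n (s ++ q) (t ++ q) := by
  induction h with
  | nil => exact .refl q
  | cons a _ ih => exact .cons a ih
  | head hab _ _ hn ihs iht =>
    rw [List.append_assoc] at ihs iht
    exact .head hab ihs iht hn

theorem of_rel (hR : IsHeadMatching R) (h : R s t) : HeadEquiv R 1 s t := by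
  obtain ⟨a, x, rfl⟩ := List.exists_cons_of_ne_nil (hR.ne_nil h)
  obtain ⟨b, y, rfl⟩ := List.exists_cons_of_ne_nil (hR.ne_nil (hR.symm h))
  have hx : HeadEquiv R 0 x (x ++ []) := by simpa using .refl x
  have hy : HeadEquiv R 0 (y ++ []) y := by simpa using .refl y
  exact .head h hx hy one_pos

theorem append_left_cancel (hR : IsHeadMatching R) {p : List A}
    (h : HeadEquiv R n (p ++ s) (p ++ t)) : HeadEquiv R n s t := by
  induction p with
  | nil => exact h
  | cons a p ih =>
    cases h with
    | cons _ h => exact ih h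
    | head haa => exact absurd rfl (hR.head_ne haa)

protected theorem trans {m n : ℕ} {s t z : List A} (hR : IsHeadMatching R)
    (h : HeadEquiv R n s t) (h' : HeadEquiv R m t z) : HeadEquiv R (n + m) s z := by
  cases h with
  | nil => exact h'.mono (Nat.le_add_left m n)
  | cons a h =>
    cases h' with
    | cons _ h' => exact .cons a (HeadEquiv.trans hR h h')
    | head hab hs ht hm => exact .head hab (HeadEquiv.trans hR h hs) ht (by omega)
  | head hab hs ht hn =>
    cases h' with
    | cons _ h' => exact .head hab hs (HeadEquiv.trans hR ht h') (by omega)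
    | head hba hs' ht' hm =>
      -- Both rules have a side starting with the same letter, so the second one undoes the first.
      obtain ⟨rfl, hax⟩ := hR.unique (hR.symm hab) hba
      obtain ⟨rfl, rfl⟩ := List.cons_eq_cons.mp hax
      have tails := (HeadEquiv.trans hR ht hs').append_left_cancel hR
      have hs := HeadEquiv.trans hR hs (tails.append_left _)
      exact .cons _ ((HeadEquiv.trans hR hs ht').mono (by omega))
termination_by (n + m, s.length)

theorem eq_nil (h : HeadEquiv R n [] t) : t = [] := by
  cases h
  rfl

end HeadEquiv

namespace IsHeadMatching

variable {R : List A → List A → Prop}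

/-- The congruence of words joined by a `HeadEquiv` derivation, that is, the one generated by `R`,
set up so that left cancellation is available. -/
def con (hR : IsHeadMatching R) : Con (FreeMonoid A) where
  r s t := ∃ n, HeadEquiv R n s.toList t.toList
  iseqv :=
    { refl := fun s ↦ ⟨0, .refl s.toList⟩
      symm := fun ⟨n, h⟩ ↦ ⟨n, h.symm hR⟩
      trans := fun ⟨n, h⟩ ⟨m, h'⟩ ↦ ⟨n + m, h.trans hR h'⟩ }
  mul' := fun ⟨n, h⟩ ⟨m, h'⟩ ↦ ⟨n + m, (h.append_right _).trans hR (h'.append_left _)⟩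

theorem con_append_of_rel (hR : IsHeadMatching R) {s t : List A} (h : R s t) (p : List A) :
    hR.con (FreeMonoid.ofList (p ++ s)) (FreeMonoid.ofList (p ++ t)) :=
  ⟨1, (HeadEquiv.of_rel hR h).append_left p⟩

theorem eq_one_of_con_mul (hR : IsHeadMatching R) {w w' : FreeMonoid A}
    (h : hR.con w (w * w')) : w' = 1 := by
  obtain ⟨n, h⟩ := h
  have h : HeadEquiv R n (w.toList ++ []) (w.toList ++ w'.toList) := by simpa using h
  exact (h.append_left_cancel hR).eq_nil

theorem symmGen_pair {a b : A} (hab : a ≠ b) (x y : List A) :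
    IsHeadMatching (Relation.SymmGen fun s t ↦ s = a :: x ∧ t = b :: y) where
  symm := Or.symm
  ne_nil := by
    rintro s t (⟨rfl, -⟩ | ⟨-, rfl⟩) <;> exact List.cons_ne_nil _ _
  head_ne := by
    rintro c d x' y' (⟨hs, ht⟩ | ⟨ht, hs⟩) <;> grind
  unique := by
    rintro c x₁ x₂ t₁ t₂ (⟨hs, ht⟩ | ⟨ht, hs⟩) (⟨hs', ht'⟩ | ⟨ht', hs'⟩) <;> grind

end IsHeadMatching

theorem oneRelCon_le_iff {u v : FreeMonoid A} {c : Con (FreeMonoid A)} :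
    oneRelCon u v ≤ c ↔ c u v := by
  refine Con.conGen_le.trans ⟨fun h ↦ h u v ⟨rfl, rfl⟩, ?_⟩
  rintro h _ _ ⟨rfl, rfl⟩
  exact h

theorem eq_one_of_oneRelCon_mul {u v : FreeMonoid A} (huv : ¬ u ∣ v) (hvu : ¬ v ∣ u)
    {w w' : FreeMonoid A} (h : oneRelCon u v w (w * w')) : w' = 1 := by
  obtain ⟨p, a, x, b, y, hab, hu, hv⟩ := exists_eq_append_cons_of_not_prefix
    (mt toList_prefix_iff_dvd.mp huv) (mt toList_prefix_iff_dvd.mp hvu)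
  have hR := IsHeadMatching.symmGen_pair hab x y
  have hle : oneRelCon u v ≤ hR.con := by
    rw [oneRelCon_le_iff, ← u.ofList_toList, ← v.ofList_toList, hu, hv]
    exact hR.con_append_of_rel (.inl ⟨rfl, rfl⟩) p
  exact hR.eq_one_of_con_mul (hle h)

theorem r_trivial_of_not_prefix_general {u v : FreeMonoid A} (huv : ¬ u ∣ v) (hvu : ¬ v ∣ u) :
    (∀ m m' : (oneRelCon u v).Quotient, m ∣ m' → m' ∣ m → m = m') ∧
      ∀ w w' : FreeMonoid A, oneRelCon u v w (w * w') → w' = 1 :=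
  have key (w w' : FreeMonoid A) : oneRelCon u v w (w * w') → w' = 1 :=
    eq_one_of_oneRelCon_mul huv hvu
  ⟨fun _ _ ↦ eq_of_dvd_of_dvd_of_con key, key⟩

end

/-- Let `M = ⟨A | u = v⟩` with `|v| ≤ |u|` and `v` not a prefix of `u`.
Then `M` is R-trivial (mutually right-divisible elements are equal), and moreover
`[w]_M = [w·w']_M` implies `w' = ε`. -/
theorem r_trivial_of_not_prefix {A : Type*} (u v : FreeMonoid A)
    (hlen : v.length ≤ u.length)
    (hpre : ¬ ∃ a, u = v * a) :
    (∀ m m' : (oneRelCon u v).Quotient,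
        (∃ a, m' = m * a) → (∃ b, m = m' * b) → m = m') ∧
    (∀ w w' : FreeMonoid A, oneRelCon u v w (w * w') → w' = 1) := by
  exact r_trivial_of_not_prefix_general
    (fun h ↦ hpre ⟨1, by rw [mul_one, eq_of_dvd_of_length_le h hlen]⟩) hpre
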